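/- There exist real numbers ξ and ζ such that limsup_{Q→∞} Q · ( min_{x ∈ ℤ, 1 ≤ x < Q} ‖xξ‖ · ‖xζ‖ ) ≥ 0.005326. -/

import Mathlib

/-- The distance from a real number to the nearest integer. -/
noncomputable def distNearestInt (t : ℝ) : ℝ := |t - round t|

def pellSeq : ℕ → ℤ × ℤ
  | 0 => (1, 1)
  | n + 1 => (3 * (pellSeq n).1 + 4 * (pellSeq n).2, 2 * (pellSeq n).1 + 3 * (pellSeq n).2)

def pellPerm (M : ℕ) : Equiv.Perm (ZMod M × ZMod M) where
  toFun z := (3 * z.1 + 4 * z.2, 2 * z.1 + 3 * z.2)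
  invFun z := (3 * z.1 - 4 * z.2, - 2 * z.1 + 3 * z.2)
  left_inv z := by ext <;> simp <;> ring
  right_inv z := by ext <;> simp <;> ring

lemma pellSeq_props (n : ℕ) : 0 < (pellSeq n).1 ∧ (n : ℤ) < (pellSeq n).2 ∧
    (pellSeq n).1 ^ 2 + 1 = 2 * (pellSeq n).2 ^ 2 := by
  induction n with
  | zero => simp [pellSeq]
  | succ n ih =>
    obtain ⟨h1, h2, h3⟩ := ih
    refine ⟨?_, ?_, ?_⟩ <;> simp only [pellSeq]
    · linarith [Int.natCast_nonneg n]
    · push_cast; linarith [Int.natCast_nonneg n]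
    · linear_combination h3

lemma pellSeq_perm (M n : ℕ) :
    (((pellSeq n).1 : ZMod M), ((pellSeq n).2 : ZMod M)) = (pellPerm M ^ n) (1, 1) := by
  induction n with
  | zero => simp [pellSeq]
  | succ n ih =>
    rw [pow_succ', Equiv.Perm.mul_apply, ← ih]
    simp [pellPerm, pellSeq]

lemma exists_pell (M : ℕ) (hM : 0 < M) (N : ℕ) : ∃ l Q : ℤ, 0 < l ∧ (N : ℤ) < Q ∧
    l ^ 2 + 1 = 2 * Q ^ 2 ∧ (M : ℤ) ∣ Q - 1 := by
  have : NeZero M := ⟨hM.ne'⟩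
  set k := orderOf (pellPerm M)
  have hk : 0 < k := orderOf_pos _
  obtain ⟨h1, h2, h3⟩ := pellSeq_props (k * N)
  refine ⟨_, _, h1, lt_of_le_of_lt ?_ h2, h3, ?_⟩
  · exact_mod_cast Nat.le_mul_of_pos_left N hk
  · have := pellSeq_perm M (k * N)
    rw [pow_mul, pow_orderOf_eq_one, one_pow] at this
    have h := congrArg Prod.snd this
    simp at h
    rw [← ZMod.intCast_zmod_eq_zero_iff_dvd]
    push_cast
    rw [h]; simp

lemma two_sq_ne (X y : ℤ) (hX : X ≠ 0) : y ^ 2 - 2 * X ^ 2 ≠ 0 := by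
  intro h
  have hX' : (X : ℝ) ≠ 0 := by exact_mod_cast hX
  have h' : (y : ℝ) ^ 2 = 2 * (X : ℝ) ^ 2 := by exact_mod_cast (by linarith : y ^ 2 = 2 * X ^ 2)
  have : √2 = |(y : ℝ) / X| := by
    rw [Real.sqrt_eq_iff_mul_self_eq (by norm_num) (abs_nonneg _), abs_mul_abs_self]
    field_simp
    linarith
  apply irrational_sqrt_two
  exact ⟨|(y : ℚ) / X|, by push_cast; exact this.symm⟩

/-- core bound -/
lemma core (l Q X W y : ℤ) (hl : 0 < l) (hQ : 0 < Q) (h : l ^ 2 + 1 = 2 * Q ^ 2)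
    (hX : X ≠ 0) (hXQ : 2 * |X| ≤ Q) (hWQ : 2 * |W| ≤ Q) (hW : W = l * X + Q * y) :
    Q ≤ 4 * (|X| * |W|) := by
  have h1 : 1 ≤ |y ^ 2 - 2 * X ^ 2| := Int.one_le_abs (two_sq_ne X y hX)
  have h2 : Q ^ 2 * (y ^ 2 - 2 * X ^ 2) = (W ^ 2 - X ^ 2) - 2 * l * (X * W) := by
    subst hW; linear_combination (X ^ 2) * h
  have h3 : Q ^ 2 ≤ |W ^ 2 - X ^ 2| + 2 * l * (|X| * |W|) := by
    calc Q ^ 2 ≤ Q ^ 2 * |y ^ 2 - 2 * X ^ 2| := by nlinarith [sq_nonneg Q]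
      _ = |(W ^ 2 - X ^ 2) - 2 * l * (X * W)| := by
        rw [← h2, abs_mul, abs_of_nonneg (sq_nonneg Q)]
      _ ≤ |W ^ 2 - X ^ 2| + |2 * l * (X * W)| := abs_sub _ _
      _ = _ := by rw [abs_mul, abs_mul X W, abs_of_pos (by linarith : 0 < 2 * l)]
  have h4 : 4 * |W ^ 2 - X ^ 2| ≤ Q ^ 2 := by
    have a1 : 4 * W ^ 2 ≤ Q ^ 2 := by nlinarith [sq_abs W, abs_nonneg W]
    have a2 : 4 * X ^ 2 ≤ Q ^ 2 := by nlinarith [sq_abs X, abs_nonneg X]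
    rcases abs_cases (W ^ 2 - X ^ 2) with ⟨e, _⟩ | ⟨e, _⟩ <;> rw [e] <;>
      nlinarith [sq_nonneg W, sq_nonneg X]
  have h5 : 2 * l ≤ 3 * Q := by nlinarith
  have h6 : 0 ≤ |X| * |W| := by positivity
  by_contra hc
  push Not at hc
  have h7 : 2 * l * (|X| * |W|) ≤ 3 * Q * (|X| * |W|) := by gcongr
  nlinarith

lemma dist_bound (l Q a b z : ℤ) (hl : 0 < l) (hQ : 0 < Q) (h : l ^ 2 + 1 = 2 * Q ^ 2)
    (hb : b = l * a + Q * z) (ha : ∀ x, Q ∣ x * a → Q ∣ x) (x : ℤ) (hx : 0 < x) (hxQ : x < Q) :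
    1 ≤ 4 * Q * (distNearestInt ((x : ℝ) * ((a : ℝ) / Q)) *
      distNearestInt ((x : ℝ) * ((b : ℝ) / Q))) := by
  have hQr : (0 : ℝ) < Q := by exact_mod_cast hQ
  have key : ∀ c : ℤ, ∃ C : ℤ, ∃ m : ℤ, C = x * c - Q * m ∧ 2 * |C| ≤ Q ∧
      distNearestInt ((x : ℝ) * ((c : ℝ) / Q)) = (|C| : ℤ) / (Q : ℝ) := by
    intro c
    set m := round ((x : ℝ) * ((c : ℝ) / Q)) with hm
    have e : distNearestInt ((x : ℝ) * ((c : ℝ) / Q)) = (|x * c - Q * m| : ℤ) / (Q : ℝ) := by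
      unfold distNearestInt
      rw [← hm]
      push_cast
      rw [← abs_of_pos hQr, ← abs_div, abs_of_pos hQr]
      congr 1
      field_simp
    refine ⟨x * c - Q * m, m, rfl, ?_, e⟩
    have h2 : distNearestInt ((x : ℝ) * ((c : ℝ) / Q)) ≤ 1 / 2 := abs_sub_round _
    rw [e, div_le_iff₀ hQr] at h2
    have : 2 * ((|x * c - Q * m| : ℤ) : ℝ) ≤ Q := by linarith
    exact_mod_cast this
  obtain ⟨X, m, hX, hX2, eX⟩ := key a
  obtain ⟨W, n, hW, hW2, eW⟩ := key b
  have hX0 : X ≠ 0 := by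
    intro h0
    have : Q ∣ x := ha x ⟨m, by linarith⟩
    exact absurd (Int.le_of_dvd hx this) (by linarith)
  have := core l Q X W (x * z - n + l * m) hl hQ h hX0 hX2 hW2 (by
    rw [hW, hX, hb]; ring)
  have hr : (Q : ℝ) ≤ 4 * (((|X| : ℤ) : ℝ) * ((|W| : ℤ) : ℝ)) := by exact_mod_cast this
  rw [eX, eW]
  have e : 4 * (Q : ℝ) * (((|X| : ℤ) : ℝ) / Q * (((|W| : ℤ) : ℝ) / Q)) =
    4 * (((|X| : ℤ) : ℝ) * ((|W| : ℤ) : ℝ)) / Q := by field_simp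
  rw [e, le_div_iff₀ hQr]
  linarith

lemma exists_mult (d r : ℝ) (hd : d ≠ 0) : ∃ s : ℤ, s ≠ 0 ∧ |s * d - r| ≤ |d| := by
  have key : ∀ s : ℤ, |(s : ℝ) - r / d| ≤ 1 → |s * d - r| ≤ |d| := by
    intro s hs
    have : s * d - r = ((s : ℝ) - r / d) * d := by field_simp
    rw [this, abs_mul]
    nlinarith [abs_nonneg d]
  have h1 := Int.floor_le (r / d)
  have h2 := Int.lt_floor_add_one (r / d)
  by_cases h : ⌊r / d⌋ = 0
  · refine ⟨1, one_ne_zero, key 1 ?_⟩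
    rw [h] at h1 h2
    rw [abs_le]; push_cast at *; constructor <;> linarith
  · refine ⟨_, h, key _ ?_⟩
    rw [abs_le]; constructor <;> linarith

lemma approx (ξ ζ ε : ℝ) (hε : 0 < ε) (N : ℕ) : ∃ l Q a b z : ℤ, 0 < l ∧ (N : ℤ) < Q ∧
    l ^ 2 + 1 = 2 * Q ^ 2 ∧ b = l * a + Q * z ∧ (∀ x, Q ∣ x * a → Q ∣ x) ∧
    |(a : ℝ) / Q - ξ| < ε ∧ |(b : ℝ) / Q - ζ| < ε := by
  obtain ⟨n, hn⟩ := exists_nat_gt (2 / ε)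
  have hn0 : 0 < n := by
    have : (0 : ℝ) < n := lt_trans (by positivity) hn
    exact_mod_cast this
  obtain ⟨p, q, hq, -, hpq⟩ := Real.exists_int_int_abs_mul_sub_le √2 hn0
  set d : ℝ := p - q * √2 with hd
  have hd0 : d ≠ 0 := by
    intro h0
    apply irrational_sqrt_two
    refine ⟨(p : ℚ) / q, ?_⟩
    have : (q : ℝ) ≠ 0 := by exact_mod_cast hq.ne'
    push_cast
    rw [div_eq_iff this]
    linarith
  have hdε : |d| < ε / 2 := by
    have e : |d| = |(q : ℝ) * √2 - p| := by rw [hd, abs_sub_comm]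
    rw [e]
    refine lt_of_le_of_lt hpq ?_
    rw [div_lt_iff₀ (by positivity)]
    rw [div_lt_iff₀ hε] at hn
    nlinarith
  obtain ⟨s, hs0, hs⟩ := exists_mult d ξ hd0
  obtain ⟨t, ht0, ht⟩ := exists_mult (-d) ζ (neg_ne_zero.mpr hd0)
  set M : ℤ := q * (s ^ 2 + t ^ 2) with hM
  have hMpos : 0 < M := by positivity
  obtain ⟨K, hK⟩ := exists_nat_gt ((|(s : ℝ)| + |(t : ℝ)|) * q / (ε / 2))
  obtain ⟨l, Q, hl, hQ, hpell, hdvd⟩ := exists_pell M.toNat (by omega) (N + K)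
  rw [Int.toNat_of_nonneg hMpos.le] at hdvd
  obtain ⟨k, hk⟩ := hdvd
  push_cast at hQ
  have hQ0 : 0 < Q := by omega
  have hQr : (0 : ℝ) < Q := by exact_mod_cast hQ0
  have hKQ : (K : ℝ) ≤ Q := by exact_mod_cast (by omega : (K : ℤ) ≤ Q)
  have hqr : (0 : ℝ) < q := by exact_mod_cast hq
  have hlr : (0 : ℝ) < l := by exact_mod_cast hl
  have hs2 : √2 * √2 = 2 := Real.mul_self_sqrt (by norm_num)
  have hs1 : 1 ≤ √2 := by rw [Real.one_le_sqrt]; norm_num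
  have herr : |√2 * Q - l| ≤ 1 := by
    have hp : (l : ℝ) ^ 2 + 1 = 2 * (Q : ℝ) ^ 2 := by exact_mod_cast hpell
    have hQ1 : (1 : ℝ) ≤ Q := by exact_mod_cast hQ0
    have e : (√2 * Q - l) * (√2 * Q + l) = 1 := by
      linear_combination (Q : ℝ) ^ 2 * hs2 - hp
    have hge : 1 ≤ √2 * Q + l := by nlinarith
    rw [abs_le]; constructor <;> nlinarith
  have hsmall : (|(s : ℝ)| + |(t : ℝ)|) * q / Q < ε / 2 := by
    rw [div_lt_iff₀ (by positivity)] at hK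
    rw [div_lt_iff₀ hQr]
    nlinarith
  have gen : ∀ u v : ℝ, |u| + |v| = |(s : ℝ)| + |(t : ℝ)| →
      |(u * (q * (√2 * Q - l)) + v * q) / Q| < ε / 2 := by
    intro u v huv
    refine lt_of_le_of_lt ?_ hsmall
    rw [abs_div, abs_of_pos hQr]
    gcongr
    rw [← huv]
    refine (abs_add_le _ _).trans ?_
    rw [abs_mul, abs_mul, abs_mul, abs_of_pos hqr]
    have : |u| * (q * |√2 * Q - l|) ≤ |u| * (q * 1) := by gcongr
    linarith
  refine ⟨l, Q, s * (p * Q - q * l) + t * q, q * s + t * (q * l - p * Q),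
    2 * s * q * Q - t * p - s * p * l, hl, by omega, hpell, ?_, ?_, ?_, ?_⟩
  · linear_combination (s * q) * hpell
  · rintro x ⟨w, hw⟩
    have e : (s * (p * Q - q * l) + t * q) * (t + s * l) =
        M + Q * (s * p * (t + s * l) - 2 * q * s ^ 2 * Q) := by
      rw [hM]; linear_combination (- q * s ^ 2) * hpell
    refine ⟨x - k * (w * (t + s * l) - x * (s * p * (t + s * l) - 2 * q * s ^ 2 * Q)), ?_⟩
    linear_combination (-x) * hk + (- k * (t + s * l)) * hw + k * x * e
  · have g := gen s t rfl
    have e : (((s * (p * Q - q * l) + t * q : ℤ) : ℝ) / Q - ξ) =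
        ((s : ℝ) * (q * (√2 * Q - l)) + t * q) / Q + (s * d - ξ) := by
      rw [hd]; push_cast; field_simp; ring
    rw [e]
    refine (abs_add_le _ _).trans_lt ?_
    linarith
  · have g := gen (-t) s (by rw [abs_neg]; ring)
    have e : (((q * s + t * (q * l - p * Q) : ℤ) : ℝ) / Q - ζ) =
        ((-t : ℝ) * (q * (√2 * Q - l)) + s * q) / Q + (t * (-d) - ζ) := by
      rw [hd]; push_cast; field_simp; ring
    rw [e]
    rw [abs_neg] at ht
    refine (abs_add_le _ _).trans_lt ?_
    linarith

lemma continuous_distNearestInt : Continuous distNearestInt := by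
  have : distNearestInt = fun t : ℝ => ‖((t : ℝ) : UnitAddCircle)‖ := by
    ext t
    rw [UnitAddCircle.norm_eq]; rfl
  rw [this]
  exact continuous_norm.comp (AddCircle.continuous_mk' 1)

def goodSet (N : ℕ) : Set (ℝ × ℝ) :=
  {p | ∃ Q : ℕ, N < Q ∧ ∀ x ∈ Finset.Ico 1 Q,
    1 < 5 * (Q : ℝ) * (distNearestInt ((x : ℝ) * p.1) * distNearestInt ((x : ℝ) * p.2))}

lemma goodSet_open (N : ℕ) : IsOpen (goodSet N) := by
  have : goodSet N = ⋃ Q : ℕ, ⋃ _ : N < Q, ⋂ x ∈ Finset.Ico 1 Q,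
      {p : ℝ × ℝ | 1 < 5 * (Q : ℝ) *
        (distNearestInt ((x : ℝ) * p.1) * distNearestInt ((x : ℝ) * p.2))} := by
    ext p; simp [goodSet]
  rw [this]
  refine isOpen_iUnion fun Q => isOpen_iUnion fun _ => isOpen_biInter_finset fun x _ => ?_
  have hc := continuous_distNearestInt
  exact isOpen_lt (by fun_prop) (by fun_prop)

lemma goodSet_dense (N : ℕ) : Dense (goodSet N) := by
  rw [Metric.dense_iff]
  rintro ⟨ξ, ζ⟩ ε hε
  obtain ⟨l, Q, a, b, z, hl, hQ, hp, hb, ha, h1, h2⟩ := approx ξ ζ ε hε N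
  have hQ0 : 0 < Q := by omega
  lift Q to ℕ using hQ0.le
  refine ⟨((a : ℝ) / Q, (b : ℝ) / Q), ?_, Q, by exact_mod_cast hQ, ?_⟩
  · rw [Metric.mem_ball, Prod.dist_eq, max_lt_iff]
    exact ⟨by simpa [Real.dist_eq] using h1, by simpa [Real.dist_eq] using h2⟩
  · intro x hx
    rw [Finset.mem_Ico] at hx
    have := dist_bound l Q a b z hl hQ0 hp hb ha x (by omega) (by omega)
    push_cast at this
    linarith

theorem stmt_11 :
    ∃ ξ ζ : ℝ,
      (0.005326 : ℝ) ≤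
        Filter.limsup
          (fun Q : ℕ =>
            (Q : ℝ) *
              sInf {y : ℝ | ∃ x : ℕ, 1 ≤ x ∧ x < Q ∧
                y = distNearestInt ((x : ℝ) * ξ) * distNearestInt ((x : ℝ) * ζ)})
          Filter.atTop := by
  obtain ⟨⟨ξ, ζ⟩, h⟩ := (dense_iInter_of_isOpen_nat goodSet_open goodSet_dense).nonempty
  rw [Set.mem_iInter] at h
  have hnn : ∀ t, 0 ≤ distNearestInt t := fun t => abs_nonneg _
  refine ⟨ξ, ζ, Filter.le_limsup_of_frequently_le ?_ ?_⟩
  · rw [Filter.frequently_atTop]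
    intro N
    obtain ⟨Q, hQ, hx⟩ := h (N + 1)
    refine ⟨Q, by omega, ?_⟩
    have hQr : (0 : ℝ) < Q := by exact_mod_cast (by omega : 0 < Q)
    have : 1 / (5 * (Q : ℝ)) ≤ sInf {y : ℝ | ∃ x : ℕ, 1 ≤ x ∧ x < Q ∧
        y = distNearestInt ((x : ℝ) * ξ) * distNearestInt ((x : ℝ) * ζ)} := by
      apply le_csInf
      · exact ⟨_, 1, le_rfl, by omega, rfl⟩
      · rintro y ⟨x, h1, h2, rfl⟩
        have := hx x (Finset.mem_Ico.mpr ⟨h1, h2⟩)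
        rw [div_le_iff₀ (by positivity)]
        simp only at this
        linarith
    have h3 : (Q : ℝ) * (1 / (5 * (Q : ℝ))) = 1 / 5 := by field_simp
    have h4 := mul_le_mul_of_nonneg_left this hQr.le
    rw [h3] at h4
    exact le_trans (by norm_num) h4
  · refine Filter.isBoundedUnder_of_eventually_le (a := 1) ?_
    filter_upwards [Filter.eventually_ge_atTop 2] with Q hQ
    have hQr : (0 : ℝ) < Q := by exact_mod_cast (by omega : 0 < Q)
    obtain ⟨k, hk0, hk, hkd⟩ := Real.exists_nat_abs_mul_sub_round_le ξ (n := Q - 1) (by omega)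
    have hc : ((Q - 1 : ℕ) : ℝ) + 1 = Q := by exact_mod_cast (by omega : Q - 1 + 1 = Q)
    rw [hc] at hkd
    have h1 : sInf {y : ℝ | ∃ x : ℕ, 1 ≤ x ∧ x < Q ∧
        y = distNearestInt ((x : ℝ) * ξ) * distNearestInt ((x : ℝ) * ζ)} ≤
        distNearestInt ((k : ℝ) * ξ) * distNearestInt ((k : ℝ) * ζ) := by
      apply csInf_le
      · refine ⟨0, ?_⟩
        rintro y ⟨x, -, -, rfl⟩
        exact mul_nonneg (hnn _) (hnn _)
      · exact ⟨k, by omega, by omega, rfl⟩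
    have h2 : distNearestInt ((k : ℝ) * ξ) * distNearestInt ((k : ℝ) * ζ) ≤ 1 / Q * (1 / 2) :=
      mul_le_mul hkd (abs_sub_round _) (hnn _) (by positivity)
    have h3 := mul_le_mul_of_nonneg_left (h1.trans h2) hQr.le
    have h4 : (Q : ℝ) * (1 / Q * (1 / 2)) = 1 / 2 := by field_simp
    rw [h4] at h3
    linarith
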